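/- Let 0 ≤ α < γ ≤ 1. Then the two-stage max–min value computes the α–γ expectation: sup_{w ∈ W_α} inf_{w' ∈ W_γ} (1/(γ−α)) Σ_{i=1}^n T_i p_i (w_i − w'_i) = E_{α,γ}(μ_T) = (1/(γ−α)) ∫_α^γ F⁻¹(s) ds. -/

import Mathlib

open MeasureTheory

/-- The discrete measure `μ_T = Σ_i p_i δ_{T_i}`. -/
noncomputable def muT {n : ℕ} (p T : Fin n → ℝ) : Measure ℝ :=
  ∑ i, ENNReal.ofReal (p i) • Measure.dirac (T i)

/-- Generalized inverse of the cdf `t ↦ μ_T (Iic t)` of `μ_T`. -/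
noncomputable def dFinv {n : ℕ} (p T : Fin n → ℝ) (q : ℝ) : ℝ :=
  sInf {t : ℝ | q ≤ (muT p T (Set.Iic t)).toReal}

/-- The α–γ expectation of `μ_T`. -/
noncomputable def dEag {n : ℕ} (p T : Fin n → ℝ) (a g : ℝ) : ℝ :=
  (1 / (g - a)) * ∫ s in a..g, dFinv p T s

/-- The polytope `W_β = {w ∈ [0,1]^n : Σ_i w_i p_i = 1 − β}`. -/
def Wset {n : ℕ} (p : Fin n → ℝ) (β : ℝ) : Set (Fin n → ℝ) :=
  {w | (∀ i, w i ∈ Set.Icc (0:ℝ) 1) ∧ ∑ i, w i * p i = 1 - β}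

open Set Filter Topology ProbabilityTheory

/-- The generalized inverse of the cumulative distribution function of a measure on `ℝ`. -/
noncomputable def quantile (μ : Measure ℝ) (q : ℝ) : ℝ :=
  sInf {t : ℝ | q ≤ μ.real (Iic t)}

theorem quantile_le_iff (μ : Measure ℝ) [IsProbabilityMeasure μ] {q : ℝ} (hq : q ∈ Ioo (0 : ℝ) 1)
    (x : ℝ) : quantile μ q ≤ x ↔ q ≤ μ.real (Iic x) := by
  simp only [quantile, ← cdf_eq_real]
  have hne : {t : ℝ | q ≤ cdf μ t}.Nonempty :=
    (((tendsto_cdf_atTop μ).eventually (lt_mem_nhds hq.2)).exists).imp fun _ h => h.le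
  have hbdd : BddBelow {t : ℝ | q ≤ cdf μ t} := by
    obtain ⟨b, hb⟩ := ((tendsto_cdf_atBot μ).eventually (gt_mem_nhds hq.1)).exists
    refine ⟨b, fun t ht => le_of_not_gt fun hlt => ?_⟩
    exact absurd (ht.trans (monotone_cdf μ hlt.le)) (not_le.2 hb)
  refine ⟨fun h => ?_, fun h => csInf_le hbdd h⟩
  have hright : Tendsto (cdf μ) (𝓝[>] x) (𝓝 (cdf μ x)) :=
    ((cdf μ).right_continuous x).mono Ioi_subset_Ici_self
  refine ge_of_tendsto hright ?_
  filter_upwards [self_mem_nhdsWithin] with y hy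
  obtain ⟨t, ht, hty⟩ := exists_lt_of_csInf_lt hne (h.trans_lt hy)
  exact le_trans ht (monotone_cdf μ hty.le)

theorem monotoneOn_quantile (μ : Measure ℝ) [IsProbabilityMeasure μ] :
    MonotoneOn (quantile μ) (Ioo 0 1) := fun _ ha _ hb hab =>
  (quantile_le_iff μ ha _).2 (hab.trans ((quantile_le_iff μ hb _).1 le_rfl))

theorem aemeasurable_quantile (μ : Measure ℝ) [IsProbabilityMeasure μ] :
    AEMeasurable (quantile μ) (volume.restrict (Ioo 0 1)) :=
  aemeasurable_restrict_of_monotoneOn measurableSet_Ioo (monotoneOn_quantile μ)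

/-- Inverse transform sampling: `quantile μ` pushes the uniform law on `(0, 1)` to `μ`. -/
theorem map_quantile (μ : Measure ℝ) [IsProbabilityMeasure μ] :
    (volume.restrict (Ioo 0 1)).map (quantile μ) = μ := by
  refine Measure.ext_of_Iic _ _ fun x => ?_
  rw [Measure.map_apply_of_aemeasurable (aemeasurable_quantile μ) measurableSet_Iic,
    Measure.restrict_apply' measurableSet_Ioo]
  have hset : quantile μ ⁻¹' Iic x ∩ Ioo 0 1 = Iic (μ.real (Iic x)) ∩ Ioo 0 1 := by
    ext q
    simp only [mem_inter_iff, mem_preimage, mem_Iic, and_congr_left_iff]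
    exact fun hq => quantile_le_iff μ hq x
  have hle : μ.real (Iic x) ≤ 1 := measureReal_le_one
  have hae : (Iic (μ.real (Iic x)) ∩ Ioo 0 1 : Set ℝ) =ᵐ[volume] Ioc 0 (μ.real (Iic x)) := by
    have h := (ae_eq_refl (Iic (μ.real (Iic x)))).inter
      (Ioo_ae_eq_Ioc (μ := volume) (a := (0 : ℝ)) (b := 1))
    refine h.trans (Eq.eventuallyEq (Set.ext fun q => ?_))
    exact ⟨fun h => ⟨h.2.1, h.1⟩, fun h => ⟨h.2, h.1, h.2.trans hle⟩⟩
  rw [hset, measure_congr hae, Real.volume_Ioc, sub_zero, ofReal_measureReal]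

section DiscreteMeasure

variable {n : ℕ} {p : Fin n → ℝ} (T : Fin n → ℝ)

theorem isProbabilityMeasure_muT (hp : ∀ i, 0 ≤ p i) (hsum : ∑ i, p i = 1) :
    IsProbabilityMeasure (muT p T) := by
  constructor
  simp [muT, ← ENNReal.ofReal_sum_of_nonneg fun i _ => hp i, hsum]

theorem integrable_muT (p : Fin n → ℝ) (f : ℝ → ℝ) : Integrable f (muT p T) :=
  integrable_finsetSum_measure.2 fun _ _ =>
    (integrable_dirac enorm_lt_top).smul_measure ENNReal.ofReal_ne_top

theorem integral_muT (hp : ∀ i, 0 ≤ p i) (f : ℝ → ℝ) :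
    ∫ x, f x ∂muT p T = ∑ i, p i * f (T i) := by
  rw [muT, integral_finsetSum_measure fun i _ =>
    (integrable_dirac enorm_lt_top).smul_measure ENNReal.ofReal_ne_top]
  simp [integral_smul_measure, ENNReal.toReal_ofReal (hp _)]

theorem ae_muT_iff (hp : ∀ i, 0 < p i) {P : ℝ → Prop} :
    (∀ᵐ x ∂muT p T, P x) ↔ ∀ i, P (T i) := by
  rw [muT, ae_finsetSum_measure_iff]
  refine forall_congr' fun i => ?_
  have h : ENNReal.ofReal (p i) ≠ 0 := by simpa using hp i
  simp [Measure.ae_ennreal_smul_measure_iff h, ae_dirac_eq]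

theorem integrableOn_quantile_muT (hp : ∀ i, 0 ≤ p i) (hsum : ∑ i, p i = 1) :
    IntegrableOn (quantile (muT p T)) (Ioo 0 1) := by
  have := isProbabilityMeasure_muT T hp hsum
  have h := integrable_muT T p id
  rw [← map_quantile (muT p T)] at h
  exact h.comp_aemeasurable (aemeasurable_quantile _)

theorem intervalIntegrable_quantile_muT (hp : ∀ i, 0 ≤ p i) (hsum : ∑ i, p i = 1)
    {a b : ℝ} (ha : 0 ≤ a) (hab : a ≤ b) (hb : b ≤ 1) :
    IntervalIntegrable (quantile (muT p T)) volume a b := by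
  rw [intervalIntegrable_iff_integrableOn_Ioo_of_le hab]
  exact (integrableOn_quantile_muT T hp hsum).mono_set (Ioo_subset_Ioo ha hb)

/-- A threshold separating the quantiles of level at most `β` from those of larger level. -/
theorem exists_quantile_threshold (hp : ∀ i, 0 < p i) (hsum : ∑ i, p i = 1) {β : ℝ}
    (hβ : β ∈ Icc (0 : ℝ) 1) :
    ∃ t : ℝ, ∀ᵐ s ∂volume.restrict (Ioo (0 : ℝ) 1),
      (s ≤ β → quantile (muT p T) s ≤ t) ∧ (β < s → t ≤ quantile (muT p T) s) := by
  have := isProbabilityMeasure_muT T (fun i => (hp i).le) hsum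
  have hrange : ∀ᵐ s ∂volume.restrict (Ioo (0 : ℝ) 1), quantile (muT p T) s ∈ range T := by
    refine ae_of_ae_map (p := fun x => x ∈ range T) (aemeasurable_quantile _) ?_
    rw [map_quantile, ae_muT_iff T hp]
    exact mem_range_self
  have hmem := ae_restrict_mem (μ := volume) (measurableSet_Ioo (a := (0 : ℝ)) (b := 1))
  rcases hβ.1.eq_or_lt with rfl | h0
  · obtain ⟨t, ht⟩ := (finite_range T).bddBelow
    refine ⟨t, ?_⟩
    filter_upwards [hrange, hmem] with s hs hs'
    exact ⟨fun h => absurd hs'.1 (not_lt.2 h), fun _ => ht hs⟩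
  rcases hβ.2.eq_or_lt with rfl | h1
  · obtain ⟨t, ht⟩ := (finite_range T).bddAbove
    refine ⟨t, ?_⟩
    filter_upwards [hrange, hmem] with s hs hs'
    exact ⟨fun _ => ht hs, fun h => absurd hs'.2 (not_lt.2 h.le)⟩
  · refine ⟨quantile (muT p T) β, ?_⟩
    filter_upwards [hmem] with s hs
    exact ⟨fun h => monotoneOn_quantile _ hs ⟨h0, h1⟩ h,
      fun h => monotoneOn_quantile _ ⟨h0, h1⟩ hs h.le⟩

theorem sum_le_integral_quantile (hp : ∀ i, 0 < p i) (hsum : ∑ i, p i = 1) {β : ℝ}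
    (hβ : β ∈ Icc (0 : ℝ) 1) {w : Fin n → ℝ} (hw : w ∈ Wset p β) :
    ∑ i, T i * p i * w i ≤ ∫ s in β..1, quantile (muT p T) s := by
  have hp' := fun i => (hp i).le
  have := isProbabilityMeasure_muT T hp' hsum
  obtain ⟨t, ht⟩ := exists_quantile_threshold T hp hsum hβ
  have hpos : ∑ i, p i * max (T i - t) 0 = ∫ s in β..1, (quantile (muT p T) s - t) := by
    rw [← integral_muT T hp' fun x => max (x - t) 0]
    conv_lhs => rw [← map_quantile (muT p T)]
    rw [integral_map (aemeasurable_quantile _) (by fun_prop),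
      intervalIntegral.integral_of_le hβ.2, integral_Ioc_eq_integral_Ioo,
      ← inter_eq_right.2 (Ioo_subset_Ioo_left hβ.1 : Ioo β 1 ⊆ Ioo 0 1),
      ← setIntegral_indicator measurableSet_Ioo]
    refine integral_congr_ae ?_
    filter_upwards [ht, ae_restrict_mem measurableSet_Ioo] with s hs hs'
    rcases le_or_gt s β with h | h
    · rw [indicator_of_notMem fun h' => absurd h'.1 (not_lt.2 h)]
      exact max_eq_right (sub_nonpos.2 (hs.1 h))
    · rw [indicator_of_mem (show s ∈ Ioo β 1 from ⟨h, hs'.2⟩)]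
      exact max_eq_left (sub_nonneg.2 (hs.2 h))
  have hsplit : ∑ i, T i * p i * w i = ∑ i, p i * ((T i - t) * w i) + t * (1 - β) := by
    rw [← hw.2, Finset.mul_sum, ← Finset.sum_add_distrib]
    exact Finset.sum_congr rfl fun i _ => by ring
  have hle : ∑ i, p i * ((T i - t) * w i) ≤ ∑ i, p i * max (T i - t) 0 := by
    refine Finset.sum_le_sum fun i _ => mul_le_mul_of_nonneg_left ?_ (hp' i)
    calc (T i - t) * w i ≤ max (T i - t) 0 * w i :=
          mul_le_mul_of_nonneg_right (le_max_left _ _) (hw.1 i).1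
      _ ≤ max (T i - t) 0 := mul_le_of_le_one_right (le_max_right _ _) (hw.1 i).2
  rw [hpos, intervalIntegral.integral_sub
    (intervalIntegrable_quantile_muT T hp' hsum hβ.1 hβ.2 le_rfl) (by simp),
    intervalIntegral.integral_const, smul_eq_mul] at hle
  linarith

theorem exists_mem_Wset_sum_eq_integral_quantile (hp : ∀ i, 0 < p i) (hsum : ∑ i, p i = 1) {β : ℝ}
    (hβ : β ∈ Icc (0 : ℝ) 1) :
    ∃ w ∈ Wset p β, ∑ i, T i * p i * w i = ∫ s in β..1, quantile (muT p T) s := by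
  have hp' := fun i => (hp i).le
  have := isProbabilityMeasure_muT T hp' hsum
  have hrestrict : volume.restrict (Ioo β 1) ≤ volume.restrict (Ioo (0 : ℝ) 1) :=
    Measure.restrict_mono (Ioo_subset_Ioo_left hβ.1) le_rfl
  have hmeas : AEMeasurable (quantile (muT p T)) (volume.restrict (Ioo β 1)) :=
    (aemeasurable_quantile _).mono_measure hrestrict
  set ν := (volume.restrict (Ioo β 1)).map (quantile (muT p T)) with hν
  have hle : ν ≤ muT p T := by
    conv_rhs => rw [← map_quantile (muT p T)]
    refine Measure.le_iff.2 fun s hs => ?_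
    rw [hν, Measure.map_apply_of_aemeasurable hmeas hs,
      Measure.map_apply_of_aemeasurable (aemeasurable_quantile _) hs]
    exact hrestrict _
  have hac : ν ≪ muT p T := Measure.absolutelyContinuous_of_le hle
  have hone : ∀ i, ν.rnDeriv (muT p T) (T i) ≤ 1 :=
    (ae_muT_iff T hp).1 (Measure.rnDeriv_le_one_of_le hle)
  refine ⟨fun i => (ν.rnDeriv (muT p T) (T i)).toReal,
    ⟨fun i => ⟨ENNReal.toReal_nonneg, ?_⟩, ?_⟩, ?_⟩
  · simpa using ENNReal.toReal_mono ENNReal.one_ne_top (hone i)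
  · have h := integral_rnDeriv_smul (f := fun _ => (1 : ℝ)) hac
    rw [integral_muT T hp', hν, integral_map hmeas (by fun_prop)] at h
    simpa [mul_comm, hβ.2] using h
  · have h := integral_rnDeriv_smul (f := fun x : ℝ => x) hac
    rw [integral_muT T hp', hν, integral_map hmeas (by fun_prop), ← integral_Ioc_eq_integral_Ioo,
      ← intervalIntegral.integral_of_le hβ.2] at h
    rw [← h]
    exact Finset.sum_congr rfl fun i _ => by rw [smul_eq_mul]; ring

theorem isGreatest_integral_quantile (hp : ∀ i, 0 < p i) (hsum : ∑ i, p i = 1) {β : ℝ}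
    (hβ : β ∈ Icc (0 : ℝ) 1) :
    IsGreatest ((fun w => ∑ i, T i * p i * w i) '' Wset p β)
      (∫ s in β..1, quantile (muT p T) s) :=
  ⟨exists_mem_Wset_sum_eq_integral_quantile T hp hsum hβ,
    forall_mem_image.2 fun _ hw => sum_le_integral_quantile T hp hsum hβ hw⟩

end DiscreteMeasure

/-- The two-stage max–min value computes the α–γ expectation:
`sup_{w∈W_α} inf_{w'∈W_γ} (1/(γ−α)) Σ_i T_i p_i (w_i − w'_i) = E_{α,γ}(μ_T)`. -/
theorem maxmin_eq_alpha_gamma_expectation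
    {n : ℕ} (hn : 1 ≤ n) (p T : Fin n → ℝ)
    (hp : ∀ i, 0 < p i) (hsum : ∑ i, p i = 1)
    (α γ : ℝ) (h0 : 0 ≤ α) (h1 : α < γ) (h2 : γ ≤ 1) :
    sSup ((fun w =>
        sInf ((fun w' => (1 / (γ - α)) * ∑ i, T i * p i * (w i - w' i)) ''
          Wset p γ)) '' Wset p α) = dEag p T α γ := by
  have hc : 0 ≤ 1 / (γ - α) := one_div_nonneg.2 (sub_nonneg.2 h1.le)
  have hα := isGreatest_integral_quantile T hp hsum (β := α) ⟨h0, h1.le.trans h2⟩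
  have hγ := isGreatest_integral_quantile T hp hsum (β := γ) ⟨h0.trans h1.le, h2⟩
  have hinner : ∀ w : Fin n → ℝ,
      sInf ((fun w' => (1 / (γ - α)) * ∑ i, T i * p i * (w i - w' i)) '' Wset p γ) =
        (1 / (γ - α)) *
          (∑ i, T i * p i * w i - ∫ s in γ..1, quantile (muT p T) s) := by
    intro w
    have h := (show Antitone fun x : ℝ => (1 / (γ - α)) * (∑ i, T i * p i * w i - x) from
      fun _ _ hxy => mul_le_mul_of_nonneg_left (sub_le_sub_left hxy _) hc).map_isGreatest hγ
    rw [image_image] at h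
    simpa only [mul_sub, Finset.sum_sub_distrib] using h.csInf_eq
  have houter := (show Monotone fun x : ℝ =>
      (1 / (γ - α)) * (x - ∫ s in γ..1, quantile (muT p T) s) from
    fun _ _ hxy => mul_le_mul_of_nonneg_left (sub_le_sub_right hxy _) hc).map_isGreatest hα
  rw [image_image] at houter
  simp only [hinner]
  rw [houter.csSup_eq, dEag]
  have hp' := fun i => (hp i).le
  rw [← intervalIntegral.integral_add_adjacent_intervals
    (intervalIntegrable_quantile_muT T hp' hsum h0 h1.le h2)
    (intervalIntegrable_quantile_muT T hp' hsum (h0.trans h1.le) h2 le_rfl), add_sub_cancel_right]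
  rfl
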